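/- arXiv:1006.2590 — 6 statements merged into one kernel-verified Lean document; each statement's English description precedes it below -/
import Mathlib

section
/- Descartes circle theorem (external configuration): if four circles in the Euclidean plane, with centers x₁,x₂,x₃,x₄ and radii r₁,r₂,r₃,r₄ > 0, are pairwise externally tangent (i.e. dist(xᵢ,xⱼ) = rᵢ + rⱼ for all i ≠ j), then their curvatures kᵢ = 1/rᵢ satisfy 2(k₁² + k₂² + k₃² + k₄²) = (k₁ + k₂ + k₃ + k₄)². -/
/-!
Place the origin at the fourth centre. The vectors from there to the other three centres lie in a
plane, so their `3 × 3` Gram determinant vanishes (`gram_det_plane`). By tangency the squared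
lengths are `(rᵢ + r₄) ^ 2`, and by polarization the inner products are
`r₄ ^ 2 + rᵢ * r₄ + rⱼ * r₄ - rᵢ * rⱼ` (`polarize_tangent`). After this substitution the
determinant equals
`4 * (r₁ * r₂ * r₃ * r₄) ^ 2 * ((∑ kᵢ) ^ 2 - 2 * ∑ kᵢ ^ 2)`, where `kᵢ = 1 / rᵢ`, and the radii are
nonzero.
-/

/-- The Gram determinant of three vectors `(a, b)`, `(c, d)`, `(e, f)` of the plane is zero. -/
lemma gram_det_plane (a b c d e f : ℝ) :
    (a ^ 2 + b ^ 2) * (c ^ 2 + d ^ 2) * (e ^ 2 + f ^ 2)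
      + 2 * (a * c + b * d) * (a * e + b * f) * (c * e + d * f)
      - (a ^ 2 + b ^ 2) * (c * e + d * f) ^ 2
      - (c ^ 2 + d ^ 2) * (a * e + b * f) ^ 2
      - (e ^ 2 + f ^ 2) * (a * c + b * d) ^ 2 = 0 := by
  ring

lemma sq_add_sq_of_dist_eq {x y : EuclideanSpace ℝ (Fin 2)} {d : ℝ} (h : dist x y = d) :
    (x 0 - y 0) ^ 2 + (x 1 - y 1) ^ 2 = d ^ 2 := by
  rw [← h, EuclideanSpace.dist_eq, Real.sq_sqrt (by positivity)]
  simp [Fin.sum_univ_two, Real.dist_eq, sq_abs]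

/-- For pairwise tangent circles centred at `x`, `y`, `z`, the inner product of `x - z` and
`y - z` in terms of the radii `r`, `s`, `t`. -/
lemma polarize_tangent {x y z : EuclideanSpace ℝ (Fin 2)} {r s t : ℝ}
    (hxy : dist x y = r + s) (hxz : dist x z = r + t) (hyz : dist y z = s + t) :
    (x 0 - z 0) * (y 0 - z 0) + (x 1 - z 1) * (y 1 - z 1) = t ^ 2 + r * t + s * t - r * s := by
  linear_combination (sq_add_sq_of_dist_eq hxz + sq_add_sq_of_dist_eq hyz
    - sq_add_sq_of_dist_eq hxy) / 2


/-- **Descartes circle theorem (external configuration).**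
If four circles in the Euclidean plane, with centers `x₁, x₂, x₃, x₄` and radii
`r₁, r₂, r₃, r₄ > 0`, are pairwise externally tangent (`dist (xᵢ) (xⱼ) = rᵢ + rⱼ`
for `i ≠ j`), then their curvatures `kᵢ = 1/rᵢ` satisfy
`2 (k₁² + k₂² + k₃² + k₄²) = (k₁ + k₂ + k₃ + k₄)²`. -/
theorem descartes_circle_theorem_external
    (x₁ x₂ x₃ x₄ : EuclideanSpace ℝ (Fin 2)) (r₁ r₂ r₃ r₄ : ℝ)
    (hr₁ : 0 < r₁) (hr₂ : 0 < r₂) (hr₃ : 0 < r₃) (hr₄ : 0 < r₄)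
    (h₁₂ : dist x₁ x₂ = r₁ + r₂) (h₁₃ : dist x₁ x₃ = r₁ + r₃)
    (h₁₄ : dist x₁ x₄ = r₁ + r₄) (h₂₃ : dist x₂ x₃ = r₂ + r₃)
    (h₂₄ : dist x₂ x₄ = r₂ + r₄) (h₃₄ : dist x₃ x₄ = r₃ + r₄) :
    2 * ((1 / r₁) ^ 2 + (1 / r₂) ^ 2 + (1 / r₃) ^ 2 + (1 / r₄) ^ 2)
      = (1 / r₁ + 1 / r₂ + 1 / r₃ + 1 / r₄) ^ 2 := by
  have hG := gram_det_plane (x₁ 0 - x₄ 0) (x₁ 1 - x₄ 1) (x₂ 0 - x₄ 0) (x₂ 1 - x₄ 1)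
    (x₃ 0 - x₄ 0) (x₃ 1 - x₄ 1)
  rw [sq_add_sq_of_dist_eq h₁₄, sq_add_sq_of_dist_eq h₂₄, sq_add_sq_of_dist_eq h₃₄,
    polarize_tangent h₁₂ h₁₄ h₂₄, polarize_tangent h₁₃ h₁₄ h₃₄,
    polarize_tangent h₂₃ h₂₄ h₃₄] at hG
  field_simp
  linear_combination -hG / 4
end

section
/- Descartes circle theorem (enclosing configuration): if three circles in the Euclidean plane with centers x₁,x₂,x₃ and radii r₁,r₂,r₃ > 0 are pairwise externally tangent (dist(xᵢ,xⱼ) = rᵢ + rⱼ for i ≠ j), and each is internally tangent to a circle with center x₀ and radius r₀ (i.e. rᵢ < r₀ and dist(x₀,xᵢ) = r₀ − rᵢ for i = 1,2,3), then the signed curvatures k₀ = −1/r₀ and kᵢ = 1/rᵢ (i = 1,2,3) satisfy 2(k₀² + k₁² + k₂² + k₃²) = (k₀ + k₁ + k₂ + k₃)². -/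
/-!
Write `uᵢ = xᵢ - x₀`. The tangency conditions determine all inner products of the `uᵢ`:
`⟪uᵢ, uᵢ⟫ = (r₀ - rᵢ)²` and, for `i ≠ j`, `⟪uᵢ, uⱼ⟫ = r₀² - r₀ rᵢ - r₀ rⱼ - rᵢ rⱼ`.
Three vectors in the plane are linearly dependent, so their Gram determinant vanishes.
As a polynomial in the radii, that determinant is `-4 (r₀ r₁ r₂ r₃)²` times
the difference of the two sides of the curvature identity.
-/

/-- The Gram determinant of three vectors `(aᵢ, bᵢ)` of the plane vanishes; here `p, q, s` are
their squared norms and `f, g, h` their mutual inner products. -/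
lemma gram_det_eq_zero (a₁ b₁ a₂ b₂ a₃ b₃ p q s f g h : ℝ)
    (hp : a₁ * a₁ + b₁ * b₁ = p) (hq : a₂ * a₂ + b₂ * b₂ = q) (hs : a₃ * a₃ + b₃ * b₃ = s)
    (hf : a₁ * a₂ + b₁ * b₂ = f) (hg : a₁ * a₃ + b₁ * b₃ = g) (hh : a₂ * a₃ + b₂ * b₃ = h) :
    p * q * s + 2 * f * g * h - p * h ^ 2 - q * g ^ 2 - s * f ^ 2 = 0 := by
  subst hp hq hs hf hg hh
  ring

lemma coord_sq_add_sq_of_dist_eq (x y : EuclideanSpace ℝ (Fin 2)) (d : ℝ) (h : dist x y = d) :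
    (x 0 - y 0) ^ 2 + (x 1 - y 1) ^ 2 = d ^ 2 := by
  rw [← h, EuclideanSpace.dist_sq_eq]
  simp [Fin.sum_univ_two, Real.dist_eq, sq_abs]


/-- **Descartes circle theorem (enclosing configuration).**
If three circles in the Euclidean plane with centers `x₁, x₂, x₃` and radii
`r₁, r₂, r₃ > 0` are pairwise externally tangent, and each is internally tangent
to a circle with center `x₀` and radius `r₀` (i.e. `rᵢ < r₀` and
`dist x₀ xᵢ = r₀ - rᵢ`), then the signed curvatures `k₀ = -1/r₀`, `kᵢ = 1/rᵢ`
satisfy `2 (k₀² + k₁² + k₂² + k₃²) = (k₀ + k₁ + k₂ + k₃)²`. -/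
theorem descartes_circle_theorem_enclosing
    (x₀ x₁ x₂ x₃ : EuclideanSpace ℝ (Fin 2)) (r₀ r₁ r₂ r₃ : ℝ)
    (hr₀ : 0 < r₀) (hr₁ : 0 < r₁) (hr₂ : 0 < r₂) (hr₃ : 0 < r₃)
    (h₁₂ : dist x₁ x₂ = r₁ + r₂) (h₁₃ : dist x₁ x₃ = r₁ + r₃)
    (h₂₃ : dist x₂ x₃ = r₂ + r₃)
    (hlt₁ : r₁ < r₀) (hlt₂ : r₂ < r₀) (hlt₃ : r₃ < r₀)
    (h₀₁ : dist x₀ x₁ = r₀ - r₁) (h₀₂ : dist x₀ x₂ = r₀ - r₂)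
    (h₀₃ : dist x₀ x₃ = r₀ - r₃) :
    2 * ((-(1 / r₀)) ^ 2 + (1 / r₁) ^ 2 + (1 / r₂) ^ 2 + (1 / r₃) ^ 2)
      = (-(1 / r₀) + 1 / r₁ + 1 / r₂ + 1 / r₃) ^ 2 := by
  have e₁₂ := coord_sq_add_sq_of_dist_eq _ _ _ h₁₂
  have e₁₃ := coord_sq_add_sq_of_dist_eq _ _ _ h₁₃
  have e₂₃ := coord_sq_add_sq_of_dist_eq _ _ _ h₂₃
  have e₀₁ := coord_sq_add_sq_of_dist_eq _ _ _ h₀₁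
  have e₀₂ := coord_sq_add_sq_of_dist_eq _ _ _ h₀₂
  have e₀₃ := coord_sq_add_sq_of_dist_eq _ _ _ h₀₃
  -- The off-diagonal Gram entries come from polarization: `2⟪u, v⟫ = ‖u‖² + ‖v‖² - ‖u - v‖²`.
  have key := gram_det_eq_zero
    (x₁ 0 - x₀ 0) (x₁ 1 - x₀ 1) (x₂ 0 - x₀ 0) (x₂ 1 - x₀ 1) (x₃ 0 - x₀ 0) (x₃ 1 - x₀ 1)
    ((r₀ - r₁) ^ 2) ((r₀ - r₂) ^ 2) ((r₀ - r₃) ^ 2)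
    (r₀ ^ 2 - r₀ * r₁ - r₀ * r₂ - r₁ * r₂)
    (r₀ ^ 2 - r₀ * r₁ - r₀ * r₃ - r₁ * r₃)
    (r₀ ^ 2 - r₀ * r₂ - r₀ * r₃ - r₂ * r₃)
    (by linear_combination e₀₁) (by linear_combination e₀₂) (by linear_combination e₀₃)
    (by linear_combination (e₀₁ + e₀₂ - e₁₂) / 2)
    (by linear_combination (e₀₁ + e₀₃ - e₁₃) / 2)
    (by linear_combination (e₀₂ + e₀₃ - e₂₃) / 2)
  have hpoly : 2 * ((r₁ * r₂ * r₃) ^ 2 + (r₀ * r₂ * r₃) ^ 2 + (r₀ * r₁ * r₃) ^ 2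
        + (r₀ * r₁ * r₂) ^ 2)
      = (-(r₁ * r₂ * r₃) + r₀ * r₂ * r₃ + r₀ * r₁ * r₃ + r₀ * r₁ * r₂) ^ 2 := by
    linear_combination (-1 / 4) * key
  field_simp
  linear_combination hpoly
end

section
/- Descartes circle theorem (line configuration): let n ∈ ℝ² be a unit vector and c ∈ ℝ, defining the line L = {y ∈ ℝ² : ⟪n, y⟫ = c}. If three circles with centers x₁,x₂,x₃ and radii r₁,r₂,r₃ > 0 are pairwise externally tangent (dist(xᵢ,xⱼ) = rᵢ + rⱼ for i ≠ j) and each is tangent to L with its center on the same side of L (i.e. ⟪n, xᵢ⟫ = c + rᵢ for i = 1,2,3), then the curvatures kᵢ = 1/rᵢ satisfy 2(k₁² + k₂² + k₃²) = (k₁ + k₂ + k₃)². -/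
/-!
Let `tᵢ` be the signed position, along the line, of the point where the `i`-th circle touches it.
By Pythagoras, tangency of circles `i` and `j` says
`(rᵢ + rⱼ)² = (rᵢ - rⱼ)² + (tᵢ - tⱼ)²`, that is, `(tᵢ - tⱼ)² = 4 rᵢ rⱼ`
(`sq_tangential_sub`). Since `t₁ - t₃ = (t₁ - t₂) + (t₂ - t₃)`, eliminating the `tᵢ` from the
three equations gives `4 r₁ r₂² r₃ = (r₁ r₃ - r₁ r₂ - r₂ r₃)²`, which is the Descartes relation
after division by `(r₁ r₂ r₃)²`.
-/

open RealInnerProductSpace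

/-- Two externally tangent circles lying on the same side of a common tangent line with unit
normal `n` touch the line at points whose squared distance is four times the product of the radii.
The coordinate along the line is the inner product with `(-n 1, n 0)`, the rotation of `n` by a
right angle. -/
lemma sq_tangential_sub
    (n : EuclideanSpace ℝ (Fin 2)) (hn : ‖n‖ = 1) (c : ℝ)
    (x y : EuclideanSpace ℝ (Fin 2)) (r s : ℝ) (h : dist x y = r + s)
    (hx : ⟪n, x⟫ = c + r) (hy : ⟪n, y⟫ = c + s) :
    ((n 0 * x 1 - n 1 * x 0) - (n 0 * y 1 - n 1 * y 0)) ^ 2 = 4 * r * s := by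
  have hn' : n 0 ^ 2 + n 1 ^ 2 = 1 := by
    have := EuclideanSpace.real_norm_sq_eq n
    rw [hn, Fin.sum_univ_two] at this
    linarith
  have hd : (x 0 - y 0) ^ 2 + (x 1 - y 1) ^ 2 = (r + s) ^ 2 := by
    have := EuclideanSpace.real_norm_sq_eq (x - y)
    rw [← dist_eq_norm, h, Fin.sum_univ_two] at this
    simpa using this.symm
  simp only [PiLp.inner_apply, Fin.sum_univ_two, RCLike.inner_apply, conj_trivial] at hx hy
  have hrs : n 0 * (x 0 - y 0) + n 1 * (x 1 - y 1) = r - s := by linarith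
  -- Lagrange's identity `|n|² |x - y|² = ⟪n, x - y⟫² + (t - t')²`
  linear_combination ((x 0 - y 0) ^ 2 + (x 1 - y 1) ^ 2) * hn' + hd
    - (n 0 * (x 0 - y 0) + n 1 * (x 1 - y 1) + (r - s)) * hrs

/-- **Descartes circle theorem (line configuration).**
Let `n` be a unit vector in the Euclidean plane and `c ∈ ℝ`, defining the line
`L = {y : ⟪n, y⟫ = c}`. If three circles with centers `x₁, x₂, x₃` and radii
`r₁, r₂, r₃ > 0` are pairwise externally tangent and each is tangent to `L` with
its center on the same side of `L` (i.e. `⟪n, xᵢ⟫ = c + rᵢ`), then the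
curvatures `kᵢ = 1/rᵢ` satisfy `2 (k₁² + k₂² + k₃²) = (k₁ + k₂ + k₃)²`. -/
theorem descartes_circle_theorem_line
    (n : EuclideanSpace ℝ (Fin 2)) (hn : ‖n‖ = 1) (c : ℝ)
    (x₁ x₂ x₃ : EuclideanSpace ℝ (Fin 2)) (r₁ r₂ r₃ : ℝ)
    (hr₁ : 0 < r₁) (hr₂ : 0 < r₂) (hr₃ : 0 < r₃)
    (h₁₂ : dist x₁ x₂ = r₁ + r₂) (h₁₃ : dist x₁ x₃ = r₁ + r₃)
    (h₂₃ : dist x₂ x₃ = r₂ + r₃)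
    (hL₁ : ⟪n, x₁⟫ = c + r₁) (hL₂ : ⟪n, x₂⟫ = c + r₂) (hL₃ : ⟪n, x₃⟫ = c + r₃) :
    2 * ((1 / r₁) ^ 2 + (1 / r₂) ^ 2 + (1 / r₃) ^ 2)
      = (1 / r₁ + 1 / r₂ + 1 / r₃) ^ 2 := by
  have e₁₂ := sq_tangential_sub n hn c x₁ x₂ r₁ r₂ h₁₂ hL₁ hL₂
  have e₁₃ := sq_tangential_sub n hn c x₁ x₃ r₁ r₃ h₁₃ hL₁ hL₃
  have e₂₃ := sq_tangential_sub n hn c x₂ x₃ r₂ r₃ h₂₃ hL₂ hL₃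
  generalize n 0 * x₁ 1 - n 1 * x₁ 0 = t₁ at *
  generalize n 0 * x₂ 1 - n 1 * x₂ 0 = t₂ at *
  generalize n 0 * x₃ 1 - n 1 * x₃ 0 = t₃ at *
  have hab : (t₁ - t₂) * (t₂ - t₃) = 2 * (r₁ * r₃ - r₁ * r₂ - r₂ * r₃) := by
    linear_combination (e₁₃ - e₁₂ - e₂₃) / 2
  have hsq : ((t₁ - t₂) * (t₂ - t₃)) ^ 2 = (4 * r₁ * r₂) * (4 * r₂ * r₃) := by
    rw [mul_pow, e₁₂, e₂₃]
  rw [hab] at hsq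
  field_simp
  linear_combination hsq / 4
end

section
/- There do not exist integers a, b, c, d satisfying the Descartes equation 2(a² + b² + c² + d²) = (a + b + c + d)² such that three of the entries a, b, c, d are odd prime numbers. (Hence there are no 'triplet primes' of three mutually tangent circles in an integral Apollonian packing, all having odd prime curvatures.) -/
/-!
The Descartes equation can be rewritten as `(d - a - b - c)² = 4 (ab + bc + ca)`, so
`ab + bc + ca` is a perfect square. For odd `a, b, c` it is `3` modulo `4`, a contradiction
(`descartes_not_three_odd`). Since the equation is symmetric in its four entries, no three of
them can be odd, and in particular no three can be odd primes.
-/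

lemma descartes_not_three_odd {a b c d : ℤ}
    (h : 2 * (a ^ 2 + b ^ 2 + c ^ 2 + d ^ 2) = (a + b + c + d) ^ 2)
    (ha : Odd a) (hb : Odd b) (hc : Odd c) : False := by
  have h1 : (d - a - b - c) ^ 2 = 2 * (2 * (a * b + b * c + c * a)) := by linarith
  have h2 : Even (d - a - b - c) := by
    have : Even ((d - a - b - c) ^ 2) := h1 ▸ even_two_mul _
    exact (Int.even_pow.1 this).1
  obtain ⟨s, hs⟩ := h2
  have h3 : s ^ 2 = a * b + b * c + c * a := by
    rw [hs] at h1
    linarith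
  obtain ⟨x, rfl⟩ := ha
  obtain ⟨y, rfl⟩ := hb
  obtain ⟨z, rfl⟩ := hc
  have h4 : s ^ 2 = 4 * (x * y + y * z + z * x + x + y + z) + 3 := by linarith
  rcases Int.even_or_odd' s with ⟨t, rfl | rfl⟩
  · have : 4 * t ^ 2 = 4 * (x * y + y * z + z * x + x + y + z) + 3 := by linarith
    omega
  · have : 4 * (t ^ 2 + t) + 1 = 4 * (x * y + y * z + z * x + x + y + z) + 3 := by linarith
    omega

/-- There do not exist integers `a, b, c, d` satisfying the Descartes equation
`2(a² + b² + c² + d²) = (a + b + c + d)²` such that three of the entries are odd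
prime numbers; hence there are no "triplet primes" of three mutually tangent
circles in an integral Apollonian packing, all having odd prime curvatures. -/
theorem no_triplet_primes_in_descartes_quadruple :
    ¬ ∃ a b c d : ℤ,
      2 * (a ^ 2 + b ^ 2 + c ^ 2 + d ^ 2) = (a + b + c + d) ^ 2 ∧
      ∃ i j k : Fin 4, i ≠ j ∧ i ≠ k ∧ j ≠ k ∧
        (∀ l ∈ ({i, j, k} : Set (Fin 4)),
          Odd (![a, b, c, d] l) ∧ ∃ p : ℕ, p.Prime ∧ ![a, b, c, d] l = p) := by
  rintro ⟨a, b, c, d, h, i, j, k, hij, hik, hjk, H⟩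
  have hi := (H i (by simp)).1
  have hj := (H j (by simp)).1
  have hk := (H k (by simp)).1
  clear H
  -- The equation is symmetric, so up to permutation only the omitted index matters.
  have abc : ¬ (Odd a ∧ Odd b ∧ Odd c) := fun ⟨p, q, r⟩ => descartes_not_three_odd h p q r
  have abd : ¬ (Odd a ∧ Odd b ∧ Odd d) := fun ⟨p, q, r⟩ =>
    descartes_not_three_odd (d := c) (by linarith) p q r
  have acd : ¬ (Odd a ∧ Odd c ∧ Odd d) := fun ⟨p, q, r⟩ =>
    descartes_not_three_odd (d := b) (by linarith) p q r
  have bcd : ¬ (Odd b ∧ Odd c ∧ Odd d) := fun ⟨p, q, r⟩ =>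
    descartes_not_three_odd (d := a) (by linarith) p q r
  clear h
  fin_cases i <;> fin_cases j <;> fin_cases k <;>
    first
      | exact absurd rfl hij
      | exact absurd rfl hik
      | exact absurd rfl hjk
      | (change Odd _ at hi hj hk
         simp at hi hj hk
         tauto)
end

section
/- The set {(a,b,c,d) ∈ ℤ⁴ : 2(a² + b² + c² + d²) − (a + b + c + d)² = −4} is infinite. (For instance, (0, 1, m²+1, (m+1)²+1) is such a quadruple for every integer m ≥ 0.) -/
/-- The set of quadruples `(a,b,c,d) ∈ ℤ⁴` with
`2(a² + b² + c² + d²) - (a + b + c + d)² = -4` is infinite; by the spherical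
Soddy–Gossett theorem this expresses that there are infinitely many integral
spherical Apollonian circle packings. -/
theorem integral_spherical_descartes_quadruples_infinite :
    {q : ℤ × ℤ × ℤ × ℤ |
      2 * (q.1 ^ 2 + q.2.1 ^ 2 + q.2.2.1 ^ 2 + q.2.2.2 ^ 2)
          - (q.1 + q.2.1 + q.2.2.1 + q.2.2.2) ^ 2 = -4}.Infinite := by
  -- the injective family `m ↦ (0, 1, m² + 1, (m + 1)² + 1)`
  refine Set.infinite_of_injective_forall_mem
    (f := fun m : ℕ => ((0, 1, (m : ℤ) ^ 2 + 1, ((m : ℤ) + 1) ^ 2 + 1) : ℤ × ℤ × ℤ × ℤ)) ?_ ?_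
  · intro m n h
    simp only [Prod.mk.injEq, true_and] at h
    -- the difference of the last two coordinates is `2m + 1`
    have h_eq : (m : ℤ) = n := by linarith [h.1, h.2]
    exact_mod_cast h_eq
  · intro m
    simp only [Set.mem_ofPred_eq]
    ring
end

section
/- Every element of the subgroup of GL(4,ℝ) generated by the four swap maps S₁, S₂, S₃, S₄ — where Sᵢ replaces the i-th coordinate aᵢ of (a₁,a₂,a₃,a₄) by 2(sum of the other three coordinates) − aᵢ — preserves the Descartes quadratic form Q and maps ℤ⁴ into ℤ⁴. Consequently, every quadruple in the orbit of an integral Descartes quadruple under this group is again an integral Descartes quadruple (Soddy's integrality theorem: if the initial four mutually tangent circles of an Apollonian packing have integral curvatures, then all circles in the packing have integral curvatures). -/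
/-!
Viewed as a quadratic in its `i`-th variable, the others being fixed, `descartesQ` has leading
coefficient `1` and linear coefficient `-2 * (sum of the other three)`. Hence `Sᵢ` exchanges each
value of that variable with its mirror image about the vertex of the parabola, and `Q` is unchanged.
Each `Sᵢ` has integer entries, so it maps `ℤ⁴` into itself. As `Sᵢ` is an involution, neither
property is lost on passing to inverses of generators, and both are stable under composition,
so they hold on the whole generated subgroup.
-/

/-- The Descartes quadratic form `Q(a,b,c,d) = 2(a²+b²+c²+d²) - (a+b+c+d)²`
on `ℝ⁴ = Fin 4 → ℝ`. -/
def descartesQ (v : Fin 4 → ℝ) : ℝ :=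
  2 * (v 0 ^ 2 + v 1 ^ 2 + v 2 ^ 2 + v 3 ^ 2) - (v 0 + v 1 + v 2 + v 3) ^ 2

/-- The matrix of the swap map `Sᵢ`, which replaces the `i`-th coordinate `aᵢ`
of `(a₁,a₂,a₃,a₄)` by `2(sum of the other three coordinates) - aᵢ` and leaves
the other coordinates unchanged. -/
def swapMatrix (i : Fin 4) : Matrix (Fin 4) (Fin 4) ℝ :=
  Matrix.of fun j k => if j = i then (if k = i then -1 else 2) else (if k = j then 1 else 0)

theorem swapMatrix_mul_self (i : Fin 4) : swapMatrix i * swapMatrix i = 1 := by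
  ext j k
  fin_cases i <;> fin_cases j <;> fin_cases k <;>
    simp [swapMatrix, Matrix.mul_apply, Fin.sum_univ_four, Matrix.one_apply]

/-- The swap map `Sᵢ` as an element of `GL(4, ℝ)` (it is its own inverse). -/
def swapGL (i : Fin 4) : GL (Fin 4) ℝ :=
  ⟨swapMatrix i, swapMatrix i, swapMatrix_mul_self i, swapMatrix_mul_self i⟩

theorem descartesQ_swapMatrix_mulVec (i : Fin 4) (v : Fin 4 → ℝ) :
    descartesQ ((swapMatrix i).mulVec v) = descartesQ v := by
  fin_cases i <;>
    simp [descartesQ, swapMatrix, Matrix.mulVec, dotProduct, Fin.sum_univ_four] <;> ring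

theorem swapMatrix_mulVec_integral (i : Fin 4) (v : Fin 4 → ℝ)
    (hv : ∀ j, ∃ n : ℤ, v j = (n : ℝ)) :
    ∀ j, ∃ n : ℤ, (swapMatrix i).mulVec v j = (n : ℝ) := by
  choose w hw using hv
  intro j
  refine ⟨∑ k, (if j = i then (if k = i then -1 else 2) else (if k = j then 1 else 0)) * w k, ?_⟩
  simp only [Matrix.mulVec, dotProduct, swapMatrix, Matrix.of_apply, hw]
  push_cast
  rfl

/-- **Soddy's integrality theorem (via the Apollonian group).**
Every element of the subgroup of `GL(4, ℝ)` generated by the four swap maps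
`S₁, S₂, S₃, S₄` preserves the Descartes quadratic form `Q` and maps `ℤ⁴` into
`ℤ⁴`. Consequently, every quadruple in the orbit of an integral Descartes
quadruple under this group is again an integral Descartes quadruple. -/
theorem apollonian_group_preserves_descartesQ_and_integrality
    (g : GL (Fin 4) ℝ) (hg : g ∈ Subgroup.closure (Set.range swapGL)) :
    (∀ v : Fin 4 → ℝ, descartesQ ((g : Matrix (Fin 4) (Fin 4) ℝ).mulVec v) = descartesQ v) ∧
    (∀ v : Fin 4 → ℝ, (∀ j, ∃ n : ℤ, v j = (n : ℝ)) →
      ∀ j, ∃ n : ℤ, ((g : Matrix (Fin 4) (Fin 4) ℝ).mulVec v) j = (n : ℝ)) ∧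
    (∀ v : Fin 4 → ℝ, descartesQ v = 0 → (∀ j, ∃ n : ℤ, v j = (n : ℝ)) →
      descartesQ ((g : Matrix (Fin 4) (Fin 4) ℝ).mulVec v) = 0 ∧
        ∀ j, ∃ n : ℤ, ((g : Matrix (Fin 4) (Fin 4) ℝ).mulVec v) j = (n : ℝ)) := by
  have key : (∀ v : Fin 4 → ℝ,
        descartesQ ((g : Matrix (Fin 4) (Fin 4) ℝ).mulVec v) = descartesQ v) ∧
      (∀ v : Fin 4 → ℝ, (∀ j, ∃ n : ℤ, v j = (n : ℝ)) →
        ∀ j, ∃ n : ℤ, ((g : Matrix (Fin 4) (Fin 4) ℝ).mulVec v) j = (n : ℝ)) := by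
    -- Integrality of `x` alone says nothing about `x⁻¹`, so the induction multiplies
    -- by generators and their inverses only.
    induction hg using Subgroup.closure_induction_left with
    | one => simp
    | mul_left x hx y _ ih =>
      obtain ⟨i, rfl⟩ := hx
      simp only [Units.val_mul, ← Matrix.mulVec_mulVec]
      exact ⟨fun v => (descartesQ_swapMatrix_mulVec i _).trans (ih.1 v),
        fun v hv => swapMatrix_mulVec_integral i _ (ih.2 v hv)⟩
    | inv_mul_cancel x hx y _ ih =>
      obtain ⟨i, rfl⟩ := hx
      simp only [Units.val_mul, ← Matrix.mulVec_mulVec]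
      -- By construction of `swapGL`, the inverse of `Sᵢ` is definitionally `Sᵢ`.
      exact ⟨fun v => (descartesQ_swapMatrix_mulVec i _).trans (ih.1 v),
        fun v hv => swapMatrix_mulVec_integral i _ (ih.2 v hv)⟩
  exact ⟨key.1, key.2, fun v h0 hv => ⟨(key.1 v).trans h0, key.2 v hv⟩⟩
end
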